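/- arXiv:1108.4980 — 4 statements merged into one kernel-verified Lean document; each statement's English description precedes it below -/
import Mathlib

section
/- Let a ≥ 2 and b be integers with gcd(a,b) = 1, and let x > 0 be real. Then F_{(a,b)}(x) = (π/x) · Σ_{n∈ℤ} (−1)^n · csch(π(a n + b)/x) / (a n + b), where csch(z) = 2/(e^{z} − e^{−z}) and the sum over n converges absolutely. (Note a n + b ≠ 0 for all n ∈ ℤ since a ≥ 2 and gcd(a,b) = 1.) -/
open Filter

lemma aux_cot (t : ℝ) (ht : 0 < t) :
    Complex.cot (Real.pi * (Complex.I * t)) =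
      -Complex.I * ((Real.cosh (Real.pi * t) / Real.sinh (Real.pi * t) : ℝ) : ℂ) := by
  have hs : 0 < Real.sinh (Real.pi * t) := Real.sinh_pos_iff.2 (mul_pos Real.pi_pos ht)
  have e : (Real.pi : ℂ) * (Complex.I * t) = ((Real.pi * t : ℝ) : ℂ) * Complex.I := by
    push_cast; ring
  have hs' : Complex.sinh ((Real.pi * t : ℝ) : ℂ) ≠ 0 := by
    rw [← Complex.ofReal_sinh]; exact_mod_cast hs.ne'
  rw [Complex.cot, e, Complex.cos_mul_I, Complex.sin_mul_I]
  push_cast at hs' ⊢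
  field_simp
  simp

lemma aux_coth_nat (t : ℝ) (ht : 0 < t) :
    HasSum (fun n : ℕ => 1 / (((n : ℝ) + 1) ^ 2 + t ^ 2))
      ((Real.pi * (Real.cosh (Real.pi * t) / Real.sinh (Real.pi * t)) - 1 / t) / (2 * t)) := by
  have hz : (Complex.I * t) ∈ Complex.integerComplement := by
    rintro ⟨n, hn⟩
    have := congrArg Complex.im hn
    simp at this
    exact ht.ne this
  have h1 := (summable_cotTerm hz).hasSum
  have h2 : ∑' n : ℕ, cotTerm (Complex.I * t) n = _ := (cot_series_rep' hz).symm
  rw [h2] at h1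
  have h3 := aux_cot t ht
  rw [← Complex.hasSum_ofReal]
  have htc : (t : ℂ) ≠ 0 := by exact_mod_cast ht.ne'
  have h5 := h1.mul_left (Complex.I / (2 * t))
  convert! h5 using 1
  · funext n
    rw [cotTerm_identity hz]
    have e : (Complex.I * t + (n + 1)) * (Complex.I * t - (n + 1)) =
        -(((n : ℂ) + 1) ^ 2 + t ^ 2) := by
      ring_nf; rw [Complex.I_sq]; ring
    have hne : ((n : ℂ) + 1) ^ 2 + t ^ 2 ≠ 0 := by
      have : ((n : ℝ) + 1) ^ 2 + t ^ 2 ≠ 0 := by positivity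
      exact_mod_cast this
    rw [e]
    push_cast
    field_simp
    rw [Complex.I_sq]; ring
  · rw [h3]
    push_cast
    generalize Complex.cosh _ / Complex.sinh _ = q
    have hI := Complex.I_ne_zero
    field_simp
    ring_nf
    rw [Complex.I_sq]; ring

lemma aux_coth (t : ℝ) (ht : 0 < t) :
    HasSum (fun m : ℤ => 1 / ((m : ℝ) ^ 2 + t ^ 2))
      (Real.pi / t * (Real.cosh (Real.pi * t) / Real.sinh (Real.pi * t))) := by
  have h4 := aux_coth_nat t ht
  have h6 : HasSum (fun n : ℕ => (fun m : ℤ => 1 / ((m : ℝ) ^ 2 + t ^ 2)) (n + 1))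
      ((Real.pi * (Real.cosh (Real.pi * t) / Real.sinh (Real.pi * t)) - 1 / t) / (2 * t)) := by
    have e : (fun n : ℕ => (fun m : ℤ => 1 / ((m : ℝ) ^ 2 + t ^ 2)) (n + 1)) =
        fun n : ℕ => 1 / (((n : ℝ) + 1) ^ 2 + t ^ 2) := by
      funext n; push_cast; ring
    rw [e]; exact h4
  have h7 : HasSum (fun n : ℕ => (fun m : ℤ => 1 / ((m : ℝ) ^ 2 + t ^ 2)) (-(n + 1)))
      ((Real.pi * (Real.cosh (Real.pi * t) / Real.sinh (Real.pi * t)) - 1 / t) / (2 * t)) := by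
    have e : (fun n : ℕ => (fun m : ℤ => 1 / ((m : ℝ) ^ 2 + t ^ 2)) (-(n + 1))) =
        fun n : ℕ => 1 / (((n : ℝ) + 1) ^ 2 + t ^ 2) := by
      funext n; push_cast; ring
    rw [e]; exact h4
  have h8 := HasSum.of_add_one_of_neg_add_one
    (f := fun m : ℤ => 1 / ((m : ℝ) ^ 2 + t ^ 2)) h6 h7
  have e : ∀ u v : ℝ, HasSum (fun m : ℤ => 1 / ((m : ℝ) ^ 2 + t ^ 2)) u → v = u →
      HasSum (fun m : ℤ => 1 / ((m : ℝ) ^ 2 + t ^ 2)) v := fun u v hu huv => huv ▸ hu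
  refine e _ _ h8 ?_
  generalize Real.cosh (Real.pi * t) / Real.sinh (Real.pi * t) = q
  rw [Int.cast_zero]
  field_simp
  ring

lemma aux_csch_pos (t : ℝ) (ht : 0 < t) :
    HasSum (fun m : ℤ => (-1 : ℝ) ^ m / ((m : ℝ) ^ 2 + t ^ 2))
      (Real.pi / (t * Real.sinh (Real.pi * t))) := by
  have h1 := aux_coth t ht
  have h2 := aux_coth (t / 2) (by positivity)
  have hinj : Function.Injective (fun k : ℤ => 2 * k) := fun a b h => by
    simpa using h
  have h3 : HasSum (fun m : ℤ => if Even m then 1 / ((m : ℝ) ^ 2 + t ^ 2) else 0)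
      (1 / 4 * (Real.pi / (t / 2) *
        (Real.cosh (Real.pi * (t / 2)) / Real.sinh (Real.pi * (t / 2))))) := by
    rw [← hinj.hasSum_iff]
    · convert! h2.mul_left (1 / 4) using 1
      funext k
      have : ((k : ℝ)) ^ 2 + (t / 2) ^ 2 ≠ 0 := by positivity
      have : (2 * (k : ℝ)) ^ 2 + t ^ 2 ≠ 0 := by positivity
      simp only [Function.comp, even_two_mul, if_true]
      push_cast
      field_simp
      ring
    · intro m hm
      rw [if_neg]
      rintro ⟨k, hk⟩
      exact hm ⟨k, by simp; omega⟩
  convert! (h3.mul_left 2).sub h1 using 1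
  · funext m
    by_cases hm : Even m
    · rw [if_pos hm, hm.neg_one_zpow]; ring
    · rw [if_neg hm, (Int.not_even_iff_odd.1 hm).neg_one_zpow]; ring
  · have e : Real.pi * t = 2 * (Real.pi * (t / 2)) := by ring
    rw [e, Real.sinh_two_mul, Real.cosh_two_mul]
    have hs : 0 < Real.sinh (Real.pi * (t / 2)) := Real.sinh_pos_iff.2 (by positivity)
    have hc : 0 < Real.cosh (Real.pi * (t / 2)) := Real.cosh_pos _
    have hcs := Real.cosh_sq (Real.pi * (t / 2))
    generalize Real.sinh (Real.pi * (t / 2)) = s at *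
    generalize Real.cosh (Real.pi * (t / 2)) = c at *
    field_simp
    rw [hcs]; ring

lemma aux_csch (t : ℝ) (ht : t ≠ 0) :
    HasSum (fun m : ℤ => (-1 : ℝ) ^ m / ((m : ℝ) ^ 2 + t ^ 2))
      (Real.pi / (t * Real.sinh (Real.pi * t))) := by
  rcases lt_or_gt_of_ne ht with h | h
  · have := aux_csch_pos (-t) (by linarith)
    simpa using this
  · exact aux_csch_pos t h

/-- For integers `a ≥ 2`, `b` with `gcd(a,b) = 1` and real `x > 0`,
`F_{(a,b)}(x) = (π/x) ∑_{n ∈ ℤ} (-1)^n csch(π(an+b)/x)/(an+b)`,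
where `csch z = 2/(e^z - e^{-z})`. -/
theorem rapidly_converging_formula (a b : ℤ) (ha : 2 ≤ a) (hab : Int.gcd a b = 1)
    (x : ℝ) (hx : 0 < x) :
    Tendsto (fun N : ℕ => ∑ n ∈ Finset.Ioo (-(N : ℤ)) (N : ℤ),
        ∑' m : ℤ, (-1 : ℝ) ^ (m + n) / ((x * m) ^ 2 + ((a : ℝ) * n + b) ^ 2))
      atTop
      (nhds (Real.pi / x *
        ∑' n : ℤ, (-1 : ℝ) ^ n *
          (2 / (Real.exp (Real.pi * ((a : ℝ) * n + b) / x) -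
                Real.exp (-(Real.pi * ((a : ℝ) * n + b) / x)))) /
          ((a : ℝ) * n + b))) := by
  have hc : ∀ n : ℤ, a * n + b ≠ 0 := by
    intro n hn
    have hd : a ∣ b := ⟨-n, by linarith⟩
    have h1 : (a.natAbs : ℤ) ∣ (Int.gcd a b : ℤ) :=
      Int.dvd_coe_gcd (by simp) (by simpa using hd)
    rw [hab] at h1
    have := Int.le_of_dvd (by norm_num) h1
    omega
  have hc' : ∀ n : ℤ, (a : ℝ) * n + b ≠ 0 := fun n => by exact_mod_cast hc n
  set g : ℤ → ℝ := fun n => (-1 : ℝ) ^ n *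
          (2 / (Real.exp (Real.pi * ((a : ℝ) * n + b) / x) -
                Real.exp (-(Real.pi * ((a : ℝ) * n + b) / x)))) /
          ((a : ℝ) * n + b) with hg
  have hg' : ∀ n, g n = (-1 : ℝ) ^ n /
      (Real.sinh (Real.pi * (((a : ℝ) * n + b) / x)) * ((a : ℝ) * n + b)) := by
    intro n
    have hs : Real.sinh (Real.pi * (((a : ℝ) * n + b) / x)) ≠ 0 := by
      rw [Ne, Real.sinh_eq_zero]
      exact mul_ne_zero Real.pi_ne_zero (div_ne_zero (hc' n) hx.ne')
    have e : Real.exp (Real.pi * ((a : ℝ) * n + b) / x) -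
        Real.exp (-(Real.pi * ((a : ℝ) * n + b) / x)) =
        2 * Real.sinh (Real.pi * (((a : ℝ) * n + b) / x)) := by
      rw [Real.sinh_eq, mul_div_assoc]; ring
    have := hc' n
    simp only [hg]
    rw [e]
    field_simp
  have hinner : ∀ n : ℤ, ∑' m : ℤ, (-1 : ℝ) ^ (m + n) / ((x * m) ^ 2 + ((a : ℝ) * n + b) ^ 2)
      = Real.pi / x * g n := by
    intro n
    have hcn := hc' n
    have h := (aux_csch (((a : ℝ) * n + b) / x) (div_ne_zero hcn hx.ne')).mul_left
      ((-1 : ℝ) ^ n / x ^ 2)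
    rw [hg' n]
    refine HasSum.tsum_eq ?_
    have hs : Real.sinh (Real.pi * (((a : ℝ) * n + b) / x)) ≠ 0 := by
      rw [Ne, Real.sinh_eq_zero]
      exact mul_ne_zero Real.pi_ne_zero (div_ne_zero hcn hx.ne')
    convert! h using 1
    · funext m
      rw [zpow_add₀ (by norm_num)]
      generalize (a : ℝ) * n + b = c at *
      have h1 : (m : ℝ) ^ 2 + (c / x) ^ 2 ≠ 0 := by positivity
      have e : (x * m) ^ 2 + c ^ 2 = x ^ 2 * ((m : ℝ) ^ 2 + (c / x) ^ 2) := by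
        field_simp
      rw [e, div_mul_div_comm, mul_comm ((-1 : ℝ) ^ m)]
    · generalize Real.sinh _ = s at *
      generalize (a : ℝ) * n + b = c at *
      field_simp
  have hsum : Summable g := by
    have hinj : Function.Injective (fun n : ℤ => a * n + b) := fun p q h => by
      have h' : a * p = a * q := by simpa using h
      exact mul_left_cancel₀ (by omega) h'
    have h0 : Summable (fun n : ℤ => 1 / (n : ℝ) ^ 2) :=
      Real.summable_one_div_int_pow.2 (by norm_num)
    have h1 := (h0.comp_injective hinj).mul_left (x / Real.pi)
    refine Summable.of_norm_bounded h1 ?_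
    intro n
    rw [hg' n]
    have hcn := hc' n
    simp only [Function.comp]
    push_cast
    generalize (a : ℝ) * n + b = c at *
    rw [norm_div, norm_zpow, norm_mul, norm_neg, norm_one, one_zpow, Real.norm_eq_abs,
      Real.norm_eq_abs, Real.abs_sinh]
    have h2 : |Real.pi * (c / x)| ≤ Real.sinh |Real.pi * (c / x)| :=
      Real.self_le_sinh_iff.2 (abs_nonneg _)
    have h3 : |Real.pi * (c / x)| = Real.pi * |c| / x := by
      rw [abs_mul, abs_div, abs_of_pos Real.pi_pos, abs_of_pos hx, mul_div_assoc]
    have hca : 0 < |c| := abs_pos.2 hcn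
    have hpi := Real.pi_pos
    calc 1 / (Real.sinh |Real.pi * (c / x)| * |c|) ≤ 1 / ((Real.pi * |c| / x) * |c|) := by
          rw [h3] at h2 ⊢
          gcongr
      _ = x / Real.pi * (1 / c ^ 2) := by
          rw [← sq_abs c]; field_simp
  simp_rw [hinner]
  have hT : Tendsto (fun N : ℕ => Finset.Ioo (-(N : ℤ)) (N : ℤ)) atTop atTop := by
    refine tendsto_atTop_finset_of_monotone ?_ ?_
    · intro p q hpq
      apply Finset.Ioo_subset_Ioo <;> omega
    · intro k
      exact ⟨k.natAbs + 1, by rw [Finset.mem_Ioo]; omega⟩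
  exact (hsum.hasSum.mul_left (Real.pi / x)).comp hT
end

section
/- For every real x > 0, F_{(2,1)}(x) = 0; that is, lim_{N→∞} Σ_{n=−N+1}^{N−1} Σ_{m∈ℤ} (−1)^{m+n} / ((x m)² + (2n+1)²) = 0. -/
open Filter

lemma F21_sum_aux (f : ℤ → ℝ) (hf : ∀ n, f (-1 - n) = - f n) (N : ℕ) :
    ∑ n ∈ Finset.Ioo (-((N + 1 : ℕ) : ℤ)) ((N + 1 : ℕ) : ℤ), f n = f N := by
  induction N with
  | zero =>
    have : Finset.Ioo (-((0 + 1 : ℕ) : ℤ)) ((0 + 1 : ℕ) : ℤ) = {0} := by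
      ext a; simp only [Finset.mem_Ioo, Finset.mem_singleton]; omega
    rw [this]; simp
  | succ k ih =>
    have : Finset.Ioo (-((k + 1 + 1 : ℕ) : ℤ)) ((k + 1 + 1 : ℕ) : ℤ)
        = insert ((k + 1 : ℕ) : ℤ) (insert (-1 - (k : ℤ))
          (Finset.Ioo (-((k + 1 : ℕ) : ℤ)) ((k + 1 : ℕ) : ℤ))) := by
      ext a; simp only [Finset.mem_Ioo, Finset.mem_insert]; omega
    rw [this, Finset.sum_insert, Finset.sum_insert, ih, hf]
    · ring
    · simp only [Finset.mem_Ioo]; omega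
    · simp only [Finset.mem_Ioo, Finset.mem_insert]; omega

/-- For every real `x > 0`, `F_{(2,1)}(x) = 0`. -/
theorem F21_eq_zero (x : ℝ) (hx : 0 < x) :
    Tendsto (fun N : ℕ => ∑ n ∈ Finset.Ioo (-(N : ℤ)) (N : ℤ),
        ∑' m : ℤ, (-1 : ℝ) ^ (m + n) / ((x * m) ^ 2 + (2 * (n : ℝ) + 1) ^ 2))
      atTop (nhds 0) := by
  rw [← tendsto_add_atTop_iff_nat 1]
  have key := F21_sum_aux (fun n : ℤ => ∑' m : ℤ, (-1 : ℝ) ^ (m + n) /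
    ((x * m) ^ 2 + (2 * (n : ℝ) + 1) ^ 2)) (by
      intro n
      rw [← tsum_neg]
      congr 1
      ext m
      have h1 : (-1 : ℝ) ^ (m + (-1 - n)) = - (-1 : ℝ) ^ (m + n) := by
        have : m + (-1 - n) = (m + n) + (2 * (-n) - 1) := by ring
        rw [this, zpow_add₀ (by norm_num), zpow_sub₀ (by norm_num), zpow_mul]
        norm_num
      rw [h1, neg_div]
      push_cast
      congr 3
      ring)
  simp_rw [key]
  have habs : ∀ k : ℤ, |(-1 : ℝ) ^ k| = 1 := by
    intro k; rw [abs_zpow]; simp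
  have h0 : (0 : ℝ) = ∑' _ : ℤ, (0 : ℝ) := by simp
  rw [h0]
  refine tendsto_tsum_of_dominated_convergence
    (bound := fun m : ℤ => (x ^ 2)⁻¹ * (1 / (m : ℝ) ^ 2) + Pi.single (M := fun _ : ℤ => ℝ) 0 1 m)
    ?_ ?_ ?_
  · refine Summable.add ((Real.summable_one_div_int_pow.mpr (by norm_num)).mul_left _) ?_
    exact (hasSum_pi_single (0 : ℤ) (1 : ℝ)).summable
  · intro m
    refine squeeze_zero_norm (a := fun n : ℕ => 1 / ((n : ℝ) + 1)) ?_
      tendsto_one_div_add_atTop_nhds_zero_nat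
    intro n
    rw [Real.norm_eq_abs, abs_div, habs, abs_of_nonneg (by positivity)]
    apply one_div_le_one_div_of_le (by positivity)
    push_cast
    have : (0 : ℝ) ≤ n := n.cast_nonneg
    nlinarith [sq_nonneg (x * m)]
  · refine Eventually.of_forall fun n m => ?_
    rw [Real.norm_eq_abs, abs_div, habs, abs_of_nonneg (by positivity)]
    have hn : (0 : ℝ) ≤ n := n.cast_nonneg
    push_cast
    by_cases hm : m = 0
    · subst hm
      simp only [Pi.single_eq_same]
      have : 1 / ((x * ((0 : ℤ) : ℝ)) ^ 2 + (2 * (n : ℝ) + 1) ^ 2) ≤ 1 := by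
        rw [div_le_one (by positivity)]
        nlinarith [sq_nonneg (x * ((0 : ℤ) : ℝ))]
      simpa using this
    · have hm' : (m : ℝ) ≠ 0 := by exact_mod_cast hm
      rw [Pi.single_eq_of_ne hm, add_zero]
      have : (x ^ 2)⁻¹ * (1 / (m : ℝ) ^ 2) = 1 / (x * m) ^ 2 := by
        field_simp
      rw [this]
      apply one_div_le_one_div_of_le (by positivity)
      nlinarith
end

section
/- Let a ≥ 2 and b be integers with gcd(a,b) = 1, let r be a real number with |r| < 1, and set ω = e^{πi/a}. Then Σ_{n∈ℤ} (−1)^n r^{|a n + b|} / |a n + b| = −(1/a) · Σ_{j=0}^{a−1} ω^{−(2j+1)b} · log( (1 − ω^{2j+1} r)(1 − ω^{−(2j+1)} r) ), where log denotes the real logarithm of the quantity (1 − ω^{2j+1} r)(1 − ω^{−(2j+1)} r) = 1 − 2 cos(π(2j+1)/a) r + r², which is a positive real number. -/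
open Filter

lemma aux_log (z : ℂ) (hz : ‖z‖ = 1) (r : ℝ) (hr : |r| < 1) :
    HasSum (fun k : ℤ => z ^ k * ((r : ℂ) ^ k.natAbs / (k.natAbs : ℂ)))
      (-Complex.log ((1 - z * r) * (1 - z⁻¹ * r))) := by
  have hz0 : z ≠ 0 := by
    rintro rfl
    simp at hz
  have h1 : ‖z * r‖ < 1 := by simpa [hz] using hr
  have h2 : ‖z⁻¹ * r‖ < 1 := by simpa [hz] using hr
  have s1 := Complex.hasSum_taylorSeries_neg_log h1
  have s2 := Complex.hasSum_taylorSeries_neg_log h2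
  have key : Complex.log ((1 - z * r) * (1 - z⁻¹ * r))
      = Complex.log (1 - z * r) + Complex.log (1 - z⁻¹ * r) := by
    have hconj : (1 - z⁻¹ * r) = (starRingEnd ℂ) (1 - z * r) := by
      simp [Complex.inv_eq_conj hz]
    have hre : 0 < (1 - z * r).re := by
      have := (Complex.re_le_norm (z * r)).trans_lt h1
      simp only [Complex.sub_re, Complex.one_re]
      linarith
    have hne : (1 - z * r) ≠ 0 := by
      intro h
      rw [h] at hre
      simp at hre
    have harg : (1 - z * r).arg ≠ Real.pi := by
      intro h
      have := Complex.abs_arg_lt_pi_div_two_iff.2 (Or.inl hre)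
      rw [h, abs_of_pos Real.pi_pos] at this
      linarith [Real.pi_pos]
    rw [hconj]
    refine Complex.log_mul hne ((map_ne_zero _).2 hne) ?_
    rw [Complex.arg_conj, if_neg harg]
    simp [Real.pi_pos, Real.pi_pos.le]
  have t1 : HasSum (fun n : ℕ => z ^ (n : ℤ) * ((r : ℂ) ^ (n : ℤ).natAbs / ((n : ℤ).natAbs : ℂ)))
      (-Complex.log (1 - z * r)) :=
    (funext fun n : ℕ => by simp [mul_pow, mul_div_assoc] :
      (fun n : ℕ => z ^ (n : ℤ) * ((r : ℂ) ^ (n : ℤ).natAbs / ((n : ℤ).natAbs : ℂ)))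
        = fun n : ℕ => (z * r) ^ n / (n : ℂ)) ▸ s1
  have t2 : HasSum (fun n : ℕ => z ^ (-(n : ℤ)) *
      ((r : ℂ) ^ (-(n : ℤ)).natAbs / ((-(n : ℤ)).natAbs : ℂ)))
      (-Complex.log (1 - z⁻¹ * r)) :=
    (funext fun n : ℕ => by simp [mul_pow, mul_div_assoc] :
      (fun n : ℕ => z ^ (-(n : ℤ)) * ((r : ℂ) ^ (-(n : ℤ)).natAbs / ((-(n : ℤ)).natAbs : ℂ)))
        = fun n : ℕ => (z⁻¹ * r) ^ n / (n : ℂ)) ▸ s2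
  have := HasSum.of_nat_of_neg (f := fun k : ℤ => z ^ k * ((r : ℂ) ^ k.natAbs / (k.natAbs : ℂ)))
    (g := -Complex.log (1 - z * r)) (g' := -Complex.log (1 - z⁻¹ * r))
    t1
    t2
  have e : -Complex.log ((1 - z * r) * (1 - z⁻¹ * r)) = -Complex.log (1 - z * r)
      + -Complex.log (1 - z⁻¹ * r)
      - z ^ (0 : ℤ) * ((r : ℂ) ^ (0 : ℤ).natAbs / ((0 : ℤ).natAbs : ℂ)) := by
    rw [key]
    simp
    ring
  rw [e]
  exact this

lemma aux_char (a : ℤ) (ha : 2 ≤ a) (ω : ℂ)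
    (hω : ω = Complex.exp (Real.pi * Complex.I / a)) (m : ℤ) (h : ¬ a ∣ m) :
    ∑ j ∈ Finset.range a.toNat, ω ^ ((2 * (j : ℤ) + 1) * m) = 0 := by
  have ha0 : (a : ℂ) ≠ 0 := by exact_mod_cast (by omega : a ≠ 0)
  have hω0 : ω ≠ 0 := by rw [hω]; exact Complex.exp_ne_zero _
  have hpow : ω ^ a = -1 := by
    rw [hω, ← Complex.exp_int_mul, mul_div_cancel₀ _ ha0, Complex.exp_pi_mul_I]
  have hne : ω ^ (2 * m) ≠ 1 := by
    intro h1
    rw [hω, ← Complex.exp_int_mul, Complex.exp_eq_one_iff] at h1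
    obtain ⟨n, hn⟩ := h1
    apply h
    refine ⟨n, ?_⟩
    have hpi : (2 * Real.pi * Complex.I : ℂ) ≠ 0 := Complex.two_pi_I_ne_zero
    have : (m : ℂ) = a * n := by
      apply mul_right_cancel₀ hpi
      push_cast at hn
      field_simp at hn
      linear_combination (2 * Real.pi * Complex.I) * hn
    exact_mod_cast this
  have e : ∀ j : ℕ, ω ^ ((2 * (j : ℤ) + 1) * m) = ω ^ m * (ω ^ (2 * m)) ^ j := by
    intro j
    rw [← zpow_natCast, ← zpow_mul, ← zpow_add₀ hω0]
    congr 1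
    ring
  simp_rw [e]
  rw [← Finset.mul_sum, geom_sum_eq hne, ← zpow_natCast, ← zpow_mul,
    Int.toNat_of_nonneg (by omega), show 2 * m * a = a * (2 * m) by ring, zpow_mul, hpow,
    zpow_mul]
  simp

lemma aux_char' (a : ℤ) (ha : 2 ≤ a) (ω : ℂ)
    (hω : ω = Complex.exp (Real.pi * Complex.I / a)) (n : ℤ) :
    ∑ j ∈ Finset.range a.toNat, ω ^ ((2 * (j : ℤ) + 1) * (a * n)) = a * (-1) ^ n := by
  have ha0 : (a : ℂ) ≠ 0 := by exact_mod_cast (by omega : a ≠ 0)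
  have hpow : ω ^ a = -1 := by
    rw [hω, ← Complex.exp_int_mul, mul_div_cancel₀ _ ha0, Complex.exp_pi_mul_I]
  have e : ∀ j : ℕ, ω ^ ((2 * (j : ℤ) + 1) * (a * n)) = (-1) ^ n := by
    intro j
    rw [show (2 * (j : ℤ) + 1) * (a * n) = a * ((2 * j + 1) * n) by ring, zpow_mul, hpow,
      zpow_mul, Odd.neg_one_zpow ⟨j, rfl⟩]
  simp_rw [e]
  rw [Finset.sum_const, Finset.card_range, nsmul_eq_mul]
  congr 1
  have : ((a.toNat : ℤ) : ℂ) = a := by rw [Int.toNat_of_nonneg (by omega)]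
  exact_mod_cast this


/-- For integers `a ≥ 2`, `b` with `gcd(a,b) = 1`, real `|r| < 1`, and `ω = exp(πi/a)`,
`∑_{n∈ℤ} (-1)^n r^{|an+b|}/|an+b|
  = -(1/a) ∑_{j=0}^{a-1} ω^{-(2j+1)b} log((1 - ω^{2j+1} r)(1 - ω^{-(2j+1)} r))`,
where each quantity `(1 - ω^{2j+1} r)(1 - ω^{-(2j+1)} r)` is a positive real number and the
logarithm is its (real) logarithm, i.e. the principal complex logarithm. -/
theorem log_sum_evaluation (a b : ℤ) (ha : 2 ≤ a) (hab : Int.gcd a b = 1)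
    (r : ℝ) (hr : |r| < 1) (ω : ℂ) (hω : ω = Complex.exp (Real.pi * Complex.I / a)) :
    ((∑' n : ℤ, (-1 : ℝ) ^ n * r ^ (a * n + b).natAbs / ((a * n + b).natAbs : ℝ)) : ℂ)
      = -(1 / (a : ℂ)) *
        ∑ j ∈ Finset.range a.toNat,
          ω ^ (-((2 * (j : ℤ) + 1) * b)) *
            Complex.log ((1 - ω ^ (2 * (j : ℤ) + 1) * (r : ℂ)) *
              (1 - ω ^ (-(2 * (j : ℤ) + 1)) * (r : ℂ))) := by
  have ha0 : (a : ℂ) ≠ 0 := by exact_mod_cast (by omega : a ≠ 0)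
  have hω0 : ω ≠ 0 := by rw [hω]; exact Complex.exp_ne_zero _
  have hnorm : ‖ω‖ = 1 := by
    rw [hω, show (Real.pi * Complex.I / a : ℂ) = ((Real.pi / a : ℝ) : ℂ) * Complex.I by
      push_cast; ring]
    exact Complex.norm_exp_ofReal_mul_I _
  have H := hasSum_sum (s := Finset.range a.toNat) (fun j _ =>
    (aux_log (ω ^ (2 * (j : ℤ) + 1)) (by simp [hnorm]) r hr).mul_left
      (ω ^ (-((2 * (j : ℤ) + 1) * b))))
  have H2 := H.mul_left (1 / (a : ℂ))
  have hF : ∀ k : ℤ, (1 / (a : ℂ)) * ∑ j ∈ Finset.range a.toNat,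
      ω ^ (-((2 * (j : ℤ) + 1) * b)) * ((ω ^ (2 * (j : ℤ) + 1)) ^ k *
        ((r : ℂ) ^ k.natAbs / (k.natAbs : ℂ)))
      = (1 / (a : ℂ)) * (∑ j ∈ Finset.range a.toNat, ω ^ ((2 * (j : ℤ) + 1) * (k - b))) *
        ((r : ℂ) ^ k.natAbs / (k.natAbs : ℂ)) := by
    intro k
    rw [mul_assoc, Finset.sum_mul]
    congr 1
    refine Finset.sum_congr rfl fun j _ => ?_
    rw [← mul_assoc, ← zpow_mul, ← zpow_add₀ hω0]
    congr 2
    ring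
  simp_rw [hF] at H2
  have hinj : Function.Injective (fun n : ℤ => a * n + b) := by
    intro x y hxy
    have : a * x = a * y := by simpa using hxy
    exact mul_left_cancel₀ (by omega) this
  rw [← hinj.hasSum_iff] at H2
  · have := H2.tsum_eq
    rw [Finset.mul_sum] at this
    rw [Finset.mul_sum]
    convert this using 1
    · refine tsum_congr fun n => ?_
      simp only [Function.comp, add_sub_cancel_right]
      rw [aux_char' a ha ω hω n]
      field_simp
      push_cast
      ring
    · refine Finset.sum_congr rfl fun j _ => ?_
      rw [zpow_neg ω (2 * (j : ℤ) + 1)]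
      ring
  · intro k hk
    rw [aux_char a ha ω hω]
    · simp
    · rintro ⟨n, hn⟩
      exact hk ⟨n, by simp only; linarith⟩
end

section
/- Let x > 0 be real, set q = e^{−π/x} and u = −q^{1/3} χ(q)/χ³(q³) (with q^{1/3} the real cube root). Then F_{(3,1)}(x) = −(2π/(9x)) · log( (1 + u³) / (1 − 8u³) ). -/
open Filter

/-- Ramanujan's theta function `χ(q) = ∏_{m=0}^∞ (1 + q^{2m+1})`. -/
noncomputable def chi (q : ℝ) : ℝ := ∏' m : ℕ, (1 + q ^ (2 * m + 1))


noncomputable def qP (Q : ℝ) (n : ℕ) : ℝ := ∏ i ∈ Finset.range n, (1 - Q ^ (i + 1))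

lemma qP_pos {Q : ℝ} (h0 : 0 < Q) (h1 : Q < 1) (n : ℕ) : 0 < qP Q n := by
  refine Finset.prod_pos fun i _ => ?_
  have := pow_lt_one₀ h0.le h1 (Nat.succ_ne_zero i)
  simpa using this

lemma qP_succ (Q : ℝ) (n : ℕ) : qP Q (n + 1) = qP Q n * (1 - Q ^ (n + 1)) := by
  simp [qP, Finset.prod_range_succ]

lemma gauss_binom {Q : ℝ} (h0 : 0 < Q) (h1 : Q < 1) (x : ℝ) (N : ℕ) :
    ∏ j ∈ Finset.range N, (1 + x * Q ^ j) =
      ∑ k ∈ Finset.range (N + 1), Q ^ (k.choose 2) * x ^ k * (qP Q N / (qP Q k * qP Q (N - k))) := by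
  induction N with
  | zero => simp [qP]
  | succ N ih =>
    rw [Finset.prod_range_succ, ih, mul_add, mul_one]
    nth_rw 1 [Finset.sum_range_succ']
    nth_rw 2 [Finset.sum_range_succ]
    rw [Finset.sum_range_succ, Finset.sum_range_succ' _ N]
    have hp := fun n => (qP_pos h0 h1 n).ne'
    have key : ∀ k ∈ Finset.range N,
        Q ^ ((k + 1).choose 2) * x ^ (k + 1) * (qP Q (N + 1) / (qP Q (k + 1) * qP Q (N + 1 - (k + 1)))) =
        Q ^ ((k + 1).choose 2) * x ^ (k + 1) * (qP Q N / (qP Q (k + 1) * qP Q (N - (k + 1)))) +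
        Q ^ (k.choose 2) * x ^ k * (qP Q N / (qP Q k * qP Q (N - k))) * (x * Q ^ N) := by
      intro k hk
      obtain ⟨d, rfl⟩ := Nat.exists_eq_add_of_lt (Finset.mem_range.mp hk)
      have e1 : k + d + 1 + 1 - (k + 1) = d + 1 := by omega
      have e2 : k + d + 1 - (k + 1) = d := by omega
      have e3 : k + d + 1 - k = d + 1 := by omega
      rw [e1, e2, e3, Nat.choose_succ_succ' k 1, Nat.choose_one_right, qP_succ Q (k + d + 1),
        qP_succ Q d, qP_succ Q k]
      have a1 := hp k
      have a2 := hp d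
      have a3 : 1 - Q ^ (d + 1) ≠ 0 := by
        have := pow_lt_one₀ h0.le h1 (Nat.succ_ne_zero d); simp at this; linarith
      have a4 : 1 - Q ^ (k + 1) ≠ 0 := by
        have := pow_lt_one₀ h0.le h1 (Nat.succ_ne_zero k); simp at this; linarith
      field_simp
      ring
    rw [Finset.sum_congr rfl key, Finset.sum_add_distrib, add_mul, Finset.sum_mul]
    have : Q ^ ((N + 1).choose 2) = Q ^ (N.choose 2) * Q ^ N := by
      rw [Nat.choose_succ_succ' N 1, Nat.choose_one_right, pow_add]; ring
    have h2 := hp N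
    have h3 := hp (N + 1)
    have h4 : qP Q 0 = 1 := by simp [qP]
    rw [this]
    simp [h4, h2, h3]
    ring

lemma jtp_finite {q z : ℝ} (h0 : 0 < q) (h1 : q < 1) (hz : z ≠ 0) (n : ℕ) :
    (∏ i ∈ Finset.range n, (1 + z * q ^ (2 * i + 1))) *
      (∏ i ∈ Finset.range n, (1 + z⁻¹ * q ^ (2 * i + 1))) =
    ∑ l ∈ Finset.Icc (-(n : ℤ)) n, q ^ (l ^ 2) * z ^ l *
      (qP (q ^ 2) (2 * n) / (qP (q ^ 2) ((n : ℤ) + l).toNat * qP (q ^ 2) ((n : ℤ) - l).toNat)) := by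
  have hq := h0.ne'
  have hQ0 : 0 < q ^ 2 := by positivity
  have hQ1 : q ^ 2 < 1 := pow_lt_one₀ h0.le h1 two_ne_zero
  have g := gauss_binom hQ0 hQ1 (z * q ^ (1 - 2 * (n : ℤ))) (2 * n)
  have hc : (∏ i ∈ Finset.range n, (z * (q ^ (2 * i + 1))⁻¹)) = z ^ n * q ^ (-(n : ℤ) ^ 2) := by
    clear g
    induction n with
    | zero => simp
    | succ n ih =>
      rw [Finset.prod_range_succ, ih, pow_succ,
        show -((n + 1 : ℕ) : ℤ) ^ 2 = -(n : ℤ) ^ 2 + -((2 * n + 1 : ℕ) : ℤ) by push_cast; ring,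
        zpow_add₀ hq, zpow_neg _ ((2 * n + 1 : ℕ) : ℤ), zpow_natCast]
      ring
  have hprod : ∏ j ∈ Finset.range (2 * n), (1 + z * q ^ (1 - 2 * (n : ℤ)) * (q ^ 2) ^ j) =
      (z ^ n * q ^ (-(n : ℤ) ^ 2)) * ((∏ i ∈ Finset.range n, (1 + z * q ^ (2 * i + 1))) *
      (∏ i ∈ Finset.range n, (1 + z⁻¹ * q ^ (2 * i + 1)))) := by
    have e1 : ∏ j ∈ Finset.range n, (1 + z * q ^ (1 - 2 * (n : ℤ)) * (q ^ 2) ^ (n + j)) =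
        ∏ i ∈ Finset.range n, (1 + z * q ^ (2 * i + 1)) := by
      refine Finset.prod_congr rfl fun i hi => ?_
      rw [mul_assoc, ← zpow_natCast, ← zpow_natCast, ← zpow_natCast, ← zpow_mul, ← zpow_add₀ hq]
      congr 3
      push_cast; ring
    have e2 : ∏ j ∈ Finset.range n, (1 + z * q ^ (1 - 2 * (n : ℤ)) * (q ^ 2) ^ j) =
        (∏ i ∈ Finset.range n, (z * (q ^ (2 * i + 1))⁻¹)) *
          ∏ i ∈ Finset.range n, (1 + z⁻¹ * q ^ (2 * i + 1)) := by
      rw [← Finset.prod_range_reflect, ← Finset.prod_mul_distrib]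
      refine Finset.prod_congr rfl fun i hi => ?_
      have hi := Finset.mem_range.mp hi
      have : q ^ (1 - 2 * (n : ℤ)) * (q ^ 2) ^ (n - 1 - i) = (q ^ (2 * i + 1))⁻¹ := by
        rw [← zpow_natCast, ← zpow_natCast, ← zpow_natCast, ← zpow_mul, ← zpow_add₀ hq, ← zpow_neg]
        congr 1
        rw [Nat.sub_sub, Nat.cast_sub (by omega)]
        push_cast; ring
      rw [mul_assoc, this]
      field_simp
      ring
    rw [two_mul, Finset.prod_range_add, e1, e2, hc]
    ring
  have hC : z ^ n * q ^ (-(n : ℤ) ^ 2) ≠ 0 := mul_ne_zero (pow_ne_zero _ hz) (zpow_ne_zero _ hq)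
  rw [hprod] at g
  apply mul_left_cancel₀ hC
  rw [g, Finset.mul_sum]
  symm
  refine Finset.sum_nbij' (fun l => ((n : ℤ) + l).toNat) (fun k => (k : ℤ) - n) ?_ ?_ ?_ ?_ ?_
  · intro a ha; simp at ha ⊢; omega
  · intro a ha; simp at ha ⊢; omega
  · intro a ha; simp at ha ⊢; omega
  · intro a ha; simp at ha ⊢
  · intro a ha
    simp only [Finset.mem_Icc] at ha
    obtain ⟨k, hk⟩ := Int.eq_ofNat_of_zero_le (show 0 ≤ (n : ℤ) + a by omega)
    obtain rfl : a = (k : ℤ) - n := by omega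
    have e1 : ((n : ℤ) + (k - n)).toNat = k := by omega
    have e2 : ((n : ℤ) - (k - n)).toNat = 2 * n - k := by omega
    rw [e1, e2, ← mul_assoc]
    congr 1
    have hk2 : (q ^ 2) ^ (k.choose 2) = q ^ ((k : ℤ) ^ 2 - k) := by
      rw [← pow_mul, ← zpow_natCast]
      congr 1
      rw [Nat.choose_two_right, Nat.mul_div_cancel' (Nat.even_mul_pred_self k).two_dvd]
      cases k <;> simp
      ring
    rw [hk2, mul_pow, ← zpow_natCast z, ← zpow_natCast z, ← zpow_natCast (q ^ _), ← zpow_mul]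
    have : z ^ (k : ℤ) = z ^ (n : ℤ) * z ^ ((k : ℤ) - n) := by
      rw [← zpow_add₀ hz]; congr 1; ring
    rw [this]
    have : q ^ ((k : ℤ) ^ 2 - k) * q ^ ((1 - 2 * (n : ℤ)) * k) =
        q ^ (-(n : ℤ) ^ 2) * q ^ (((k : ℤ) - n) ^ 2) := by
      rw [← zpow_add₀ hq, ← zpow_add₀ hq]; congr 1; ring
    linear_combination (-(z ^ (n : ℤ) * z ^ ((k : ℤ) - n))) * this

lemma summable_theta_nat {q : ℝ} (h0 : 0 < q) (h1 : q < 1) (w : ℝ) :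
    Summable fun n : ℕ => q ^ (n ^ 2) * w ^ n := by
  have ht : Tendsto (fun n : ℕ => |q ^ n * w|) atTop (nhds 0) := by
    have := ((tendsto_pow_atTop_nhds_zero_of_lt_one h0.le h1).mul_const w).abs
    simpa using this
  refine Summable.of_norm_bounded_eventually_nat (g := fun n : ℕ => (1 / 2 : ℝ) ^ n)
    (summable_geometric_of_lt_one (by norm_num) (by norm_num)) ?_
  filter_upwards [ht.eventually (gt_mem_nhds (show (0 : ℝ) < 1 / 2 by norm_num))] with n hn
  rw [sq, pow_mul, ← mul_pow, norm_pow, Real.norm_eq_abs]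
  exact pow_le_pow_left₀ (abs_nonneg _) hn.le n

lemma summable_theta {q : ℝ} (h0 : 0 < q) (h1 : q < 1) (z : ℝ) :
    Summable fun l : ℤ => q ^ (l ^ 2) * z ^ l := by
  apply Summable.of_nat_of_neg
  · refine (summable_theta_nat h0 h1 z).congr fun n => ?_
    rw [zpow_natCast, ← zpow_natCast q]; push_cast; rfl
  · refine (summable_theta_nat h0 h1 z⁻¹).congr fun n => ?_
    rw [zpow_neg, zpow_natCast, inv_pow, ← zpow_natCast q]; push_cast; rw [neg_sq]

lemma summable_geo {q : ℝ} (h0 : 0 < q) (h1 : q < 1) (a b : ℕ) (ha : 0 < a) :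
    Summable fun j : ℕ => q ^ (a * j + b) := by
  simp_rw [pow_add, pow_mul]
  exact (summable_geometric_of_lt_one (by positivity) (pow_lt_one₀ h0.le h1 ha.ne')).mul_right _

lemma multipliable_aux {q : ℝ} (h0 : 0 < q) (h1 : q < 1) (a b : ℕ) (ha : 0 < a) (z : ℝ) :
    Multipliable fun j : ℕ => (1 + z * q ^ (a * j + b)) :=
  Real.multipliable_one_add_of_summable ((summable_geo h0 h1 a b ha).mul_left z)

/-- The even Euler product in q. -/
noncomputable def Ef (q : ℝ) : ℝ := ∏' j : ℕ, (1 + (-1) * q ^ (2 * j + 2))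

lemma qP_eq (q : ℝ) (n : ℕ) : qP (q ^ 2) n = ∏ j ∈ Finset.range n, (1 + (-1) * q ^ (2 * j + 2)) := by
  refine Finset.prod_congr rfl fun j _ => ?_
  rw [← pow_mul]; ring

lemma qP_tendsto {q : ℝ} (h0 : 0 < q) (h1 : q < 1) :
    Tendsto (fun n => qP (q ^ 2) n) atTop (nhds (Ef q)) := by
  simp_rw [qP_eq]
  exact (multipliable_aux h0 h1 2 2 two_pos (-1)).hasProd.tendsto_prod_nat

lemma Ef_pos {q : ℝ} (h0 : 0 < q) (h1 : q < 1) : 0 < Ef q := by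
  have h : ∀ j : ℕ, 0 < 1 + (-1) * q ^ (2 * j + 2) := fun j => by
    have := pow_lt_one₀ h0.le h1 (show 2 * j + 2 ≠ 0 by omega); linarith
  rw [Ef, ← Real.rexp_tsum_eq_tprod h (Real.summable_log_one_add_of_summable
    ((summable_geo h0 h1 2 2 two_pos).mul_left (-1)))]
  exact Real.exp_pos _

lemma qP_anti {Q : ℝ} (h0 : 0 < Q) (h1 : Q < 1) : Antitone (qP Q) := by
  refine antitone_nat_of_succ_le fun n => ?_
  rw [qP_succ]
  have := qP_pos h0 h1 n
  have := pow_pos h0 (n + 1)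
  nlinarith

lemma jtp {q z : ℝ} (h0 : 0 < q) (h1 : q < 1) (hz : z ≠ 0) :
    ∑' l : ℤ, q ^ (l ^ 2) * z ^ l = Ef q * (∏' i : ℕ, (1 + z * q ^ (2 * i + 1))) *
      (∏' i : ℕ, (1 + z⁻¹ * q ^ (2 * i + 1))) := by
  have hQ0 : 0 < q ^ 2 := by positivity
  have hQ1 : q ^ 2 < 1 := pow_lt_one₀ h0.le h1 two_ne_zero
  have hE := Ef_pos h0 h1
  have hEle : ∀ n, Ef q ≤ qP (q ^ 2) n := fun n => (qP_anti hQ0 hQ1).le_of_tendsto (qP_tendsto h0 h1) n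
  have hP1 : ∀ n, qP (q ^ 2) n ≤ 1 := fun n => by
    have := qP_anti hQ0 hQ1 (Nat.zero_le n); simpa [qP] using this
  have hlim1 := ((multipliable_aux h0 h1 2 1 two_pos z).hasProd.tendsto_prod_nat).mul
    ((multipliable_aux h0 h1 2 1 two_pos z⁻¹).hasProd.tendsto_prod_nat)
  simp_rw [jtp_finite h0 h1 hz] at hlim1
  let f : ℕ → ℤ → ℝ := fun n l => if l ∈ Finset.Icc (-(n : ℤ)) n then q ^ (l ^ 2) * z ^ l *
      (qP (q ^ 2) (2 * n) / (qP (q ^ 2) ((n : ℤ) + l).toNat * qP (q ^ 2) ((n : ℤ) - l).toNat)) else 0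
  have hf : ∀ n : ℕ, ∑ l ∈ Finset.Icc (-(n : ℤ)) n, q ^ (l ^ 2) * z ^ l *
      (qP (q ^ 2) (2 * n) / (qP (q ^ 2) ((n : ℤ) + l).toNat * qP (q ^ 2) ((n : ℤ) - l).toNat))
      = ∑' l, f n l := by
    intro n
    rw [tsum_eq_sum (s := Finset.Icc (-(n : ℤ)) n)]
    · refine Finset.sum_congr rfl fun l hl => ?_
      simp only [f]; rw [if_pos hl]
    · intro l hl; simp only [f]; rw [if_neg hl]
  simp_rw [hf] at hlim1
  have hlim2 : Tendsto (fun n => ∑' l, f n l) atTop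
      (nhds (∑' l : ℤ, q ^ (l ^ 2) * z ^ l * (Ef q / (Ef q * Ef q)))) := by
    refine tendsto_tsum_of_dominated_convergence
      (bound := fun l : ℤ => ‖q ^ (l ^ 2) * z ^ l‖ * (1 / (Ef q * Ef q)))
      ((summable_theta h0 h1 z).norm.mul_right _) ?_ (Eventually.of_forall ?_)
    · intro l
      have t1 : Tendsto (fun n : ℕ => ((n : ℤ) + l).toNat) atTop atTop := by
        refine tendsto_atTop.mpr fun b => ?_
        filter_upwards [eventually_ge_atTop (b + l.natAbs)] with n hn
        omega
      have t2 : Tendsto (fun n : ℕ => ((n : ℤ) - l).toNat) atTop atTop := by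
        refine tendsto_atTop.mpr fun b => ?_
        filter_upwards [eventually_ge_atTop (b + l.natAbs)] with n hn
        omega
      have t3 : Tendsto (fun n : ℕ => 2 * n) atTop atTop := by
        refine tendsto_atTop.mpr fun b => ?_
        filter_upwards [eventually_ge_atTop b] with n hn
        omega
      have T := qP_tendsto h0 h1
      have := (((T.comp t3).div ((T.comp t1).mul (T.comp t2)) (by positivity)).const_mul
        (q ^ (l ^ 2) * z ^ l))
      refine this.congr' ?_
      filter_upwards [eventually_ge_atTop l.natAbs] with n hn
      have : l ∈ Finset.Icc (-(n : ℤ)) n := by simp; omega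
      simp only [f, if_pos this]
      rfl
    · intro n l
      simp only [f]
      split_ifs
      · rw [norm_mul]
        refine mul_le_mul_of_nonneg_left ?_ (norm_nonneg _)
        have a := qP_pos hQ0 hQ1
        rw [Real.norm_of_nonneg (div_nonneg (a _).le (mul_nonneg (a _).le (a _).le))]
        exact div_le_div₀ zero_le_one (hP1 _) (by positivity)
          (mul_le_mul (hEle _) (hEle _) hE.le (a _).le)
      · rw [norm_zero]; positivity
  have := tendsto_nhds_unique hlim1 hlim2
  rw [tsum_mul_right] at this
  rw [mul_assoc, this]
  field_simp

noncomputable def phi (q : ℝ) : ℝ := ∑' l : ℤ, q ^ (l ^ 2)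
noncomputable def phim (q : ℝ) : ℝ := ∑' l : ℤ, q ^ (l ^ 2) * (-1 : ℝ) ^ l
noncomputable def psiT (q : ℝ) : ℝ := ∑' l : ℤ, q ^ (l ^ 2 + l)
noncomputable def chi1 (q : ℝ) : ℝ := ∏' j : ℕ, (1 + (-1) * q ^ (2 * j + 1))
noncomputable def chi2 (q : ℝ) : ℝ := ∏' j : ℕ, (1 + 1 * q ^ (2 * j + 2))

lemma chi_eq (q : ℝ) : chi q = ∏' j : ℕ, (1 + 1 * q ^ (2 * j + 1)) := by simp [chi]

lemma phi_eq {q : ℝ} (h0 : 0 < q) (h1 : q < 1) : phi q = Ef q * chi q ^ 2 := by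
  have := jtp h0 h1 (z := 1) one_ne_zero
  simp only [one_zpow, mul_one, inv_one] at this
  rw [phi, this, chi_eq]; ring

lemma phim_eq {q : ℝ} (h0 : 0 < q) (h1 : q < 1) : phim q = Ef q * chi1 q ^ 2 := by
  have := jtp h0 h1 (z := -1) (by norm_num)
  rw [inv_neg_one] at this
  rw [phim, this, chi1]; ring

lemma psiT_eq {q : ℝ} (h0 : 0 < q) (h1 : q < 1) : psiT q = 2 * Ef q * chi2 q ^ 2 := by
  have := jtp h0 h1 (z := q) h0.ne'
  simp_rw [← zpow_add₀ h0.ne'] at this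
  rw [psiT, this]
  have e1 : ∏' i : ℕ, (1 + q * q ^ (2 * i + 1)) = chi2 q := by
    rw [chi2]; refine tprod_congr fun i => ?_; ring
  have e2 : ∏' i : ℕ, (1 + q⁻¹ * q ^ (2 * i + 1)) = 2 * chi2 q := by
    have : ∀ i : ℕ, 1 + q⁻¹ * q ^ (2 * i + 1) = 1 + 1 * q ^ (2 * i + 0) := fun i => by
      have := h0.ne'
      field_simp; simp; ring
    simp_rw [this]
    rw [(tprod_eq_zero_mul' (f := fun i : ℕ => 1 + 1 * q ^ (2 * i + 0)) ?_), chi2]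
    · norm_num [mul_add]
    · exact (multipliable_aux h0 h1 2 2 two_pos 1).congr fun i => by ring
  rw [e1, e2]; ring

lemma tprod_pos_aux {q : ℝ} (h0 : 0 < q) (h1 : q < 1) (z : ℝ) (hz : -1 ≤ z) (b : ℕ) (hb : b ≠ 0) :
    0 < ∏' j : ℕ, (1 + z * q ^ (2 * j + b)) := by
  have h : ∀ j : ℕ, 0 < 1 + z * q ^ (2 * j + b) := fun j => by
    have := pow_lt_one₀ h0.le h1 (show 2 * j + b ≠ 0 by omega)
    have := pow_pos h0 (2 * j + b)
    nlinarith
  rw [← Real.rexp_tsum_eq_tprod h (Real.summable_log_one_add_of_summable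
    ((summable_geo h0 h1 2 b two_pos).mul_left z))]
  exact Real.exp_pos _

lemma chi_prod {q : ℝ} (h0 : 0 < q) (h1 : q < 1) : chi q * chi1 q * chi2 q = 1 := by
  have key : ∀ z : ℝ, (∏' j : ℕ, (1 + z * q ^ (2 * j + 1))) * (∏' j : ℕ, (1 + z * q ^ (2 * j + 2))) =
      ∏' j : ℕ, (1 + z * q ^ (1 * j + 1)) := by
    intro z
    have := tprod_even_mul_odd (f := fun j : ℕ => 1 + z * q ^ (1 * j + 1))
      ((multipliable_aux h0 h1 2 1 two_pos z).congr fun i => by ring)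
      ((multipliable_aux h0 h1 2 2 two_pos z).congr fun i => by ring)
    rw [← this]
    congr 1 <;> exact tprod_congr fun i => by ring
  have k1 := key 1
  have k2 := key (-1)
  have k3 := (multipliable_aux h0 h1 1 1 one_pos 1).tprod_mul (multipliable_aux h0 h1 1 1 one_pos (-1))
  have k4 : ∏' b : ℕ, (1 + 1 * q ^ (1 * b + 1)) * (1 + -1 * q ^ (1 * b + 1)) = Ef q := by
    rw [Ef]; exact tprod_congr fun i => by ring
  rw [k4, ← k1, ← k2] at k3
  rw [← chi_eq] at k3
  change Ef q = chi q * chi2 q * (chi1 q * Ef q) at k3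
  have := (Ef_pos h0 h1).ne'
  apply mul_right_cancel₀ this
  linarith

lemma even_sum (F : ℤ × ℤ → ℝ) (e : ℤ × ℤ → ℤ × ℤ) (hi : Function.Injective e)
    (he : ∀ r, Even ((e r).1 + (e r).2)) (hs : ∀ p : ℤ × ℤ, Even (p.1 + p.2) → ∃ r, e r = p) :
    ∑' p, F p * (1 + (-1 : ℝ) ^ (p.1 + p.2)) = 2 * ∑' r, F (e r) := by
  rw [← hi.tsum_eq (f := fun p => F p * (1 + (-1 : ℝ) ^ (p.1 + p.2))), ← tsum_mul_left]
  · refine tsum_congr fun r => ?_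
    rw [(he r).neg_one_zpow]; ring
  · intro p hp
    by_cases h : Even (p.1 + p.2)
    · exact hs p h
    · exfalso; apply hp
      simp [(Int.not_even_iff_odd.mp h).neg_one_zpow]

lemma odd_sum (F : ℤ × ℤ → ℝ) (e : ℤ × ℤ → ℤ × ℤ) (hi : Function.Injective e)
    (he : ∀ r, Odd ((e r).1 + (e r).2)) (hs : ∀ p : ℤ × ℤ, Odd (p.1 + p.2) → ∃ r, e r = p) :
    ∑' p, F p * (1 - (-1 : ℝ) ^ (p.1 + p.2)) = 2 * ∑' r, F (e r) := by
  rw [← hi.tsum_eq (f := fun p => F p * (1 - (-1 : ℝ) ^ (p.1 + p.2))), ← tsum_mul_left]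
  · refine tsum_congr fun r => ?_
    rw [(he r).neg_one_zpow]; ring
  · intro p hp
    by_cases h : Odd (p.1 + p.2)
    · exact hs p h
    · exfalso; apply hp
      simp [(Int.not_odd_iff_even.mp h).neg_one_zpow]

lemma sum_phi {q : ℝ} (h0 : 0 < q) (h1 : q < 1) : Summable fun l : ℤ => q ^ (l ^ 2) := by
  simpa using summable_theta h0 h1 1
lemma sum_phim {q : ℝ} (h0 : 0 < q) (h1 : q < 1) :
    Summable fun l : ℤ => q ^ (l ^ 2) * (-1 : ℝ) ^ l := summable_theta h0 h1 (-1)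
lemma sum_psiT {q : ℝ} (h0 : 0 < q) (h1 : q < 1) : Summable fun l : ℤ => q ^ (l ^ 2 + l) := by
  simpa [zpow_add₀ h0.ne'] using summable_theta h0 h1 q

lemma prod_sum {f g : ℤ → ℝ} (hf : Summable f) (hg : Summable g) :
    (∑' a, f a) * (∑' b, g b) = ∑' p : ℤ × ℤ, f p.1 * g p.2 :=
  tsum_mul_tsum_of_summable_norm hf.norm hg.norm

lemma prod_summable {f g : ℤ → ℝ} (hf : Summable f) (hg : Summable g) :
    Summable fun p : ℤ × ℤ => f p.1 * g p.2 :=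
  summable_mul_of_summable_norm hf.norm hg.norm

lemma phi_add {q r : ℝ} (h0 : 0 < q) (h1 : q < 1) (h0' : 0 < r) (h1' : r < 1) :
    phi q * phi r + phim q * phim r =
      ∑' p : ℤ × ℤ, q ^ (p.1 ^ 2) * r ^ (p.2 ^ 2) * (1 + (-1 : ℝ) ^ (p.1 + p.2)) := by
  rw [phi, phi, phim, phim, prod_sum (sum_phi h0 h1) (sum_phi h0' h1'),
    prod_sum (sum_phim h0 h1) (sum_phim h0' h1'),
    ← (prod_summable (sum_phi h0 h1) (sum_phi h0' h1')).tsum_add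
      (prod_summable (sum_phim h0 h1) (sum_phim h0' h1'))]
  refine tsum_congr fun p => ?_
  rw [zpow_add₀ (by norm_num)]; ring

lemma phi_sub {q r : ℝ} (h0 : 0 < q) (h1 : q < 1) (h0' : 0 < r) (h1' : r < 1) :
    phi q * phi r - phim q * phim r =
      ∑' p : ℤ × ℤ, q ^ (p.1 ^ 2) * r ^ (p.2 ^ 2) * (1 - (-1 : ℝ) ^ (p.1 + p.2)) := by
  rw [phi, phi, phim, phim, prod_sum (sum_phi h0 h1) (sum_phi h0' h1'),
    prod_sum (sum_phim h0 h1) (sum_phim h0' h1'),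
    ← (prod_summable (sum_phi h0 h1) (sum_phi h0' h1')).tsum_sub
      (prod_summable (sum_phim h0 h1) (sum_phim h0' h1'))]
  refine tsum_congr fun p => ?_
  rw [zpow_add₀ (by norm_num)]; ring

lemma sq_lt {q : ℝ} (h0 : 0 < q) (h1 : q < 1) : q ^ 2 < 1 := pow_lt_one₀ h0.le h1 two_ne_zero

lemma npow_zpow (q : ℝ) (n : ℕ) (k : ℤ) : (q ^ n) ^ k = q ^ ((n : ℤ) * k) := by
  rw [← zpow_natCast, ← zpow_mul]

lemma quart_add {q : ℝ} (h0 : 0 < q) (h1 : q < 1) :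
    phi q * phi q + phim q * phim q = 2 * phi (q ^ 2) ^ 2 := by
  rw [phi_add h0 h1 h0 h1, even_sum _ (fun r => (r.1 + r.2, r.1 - r.2)), sq (phi _), phi,
    prod_sum (sum_phi (by positivity) (sq_lt h0 h1)) (sum_phi (by positivity) (sq_lt h0 h1))]
  · congr 1; refine tsum_congr fun r => ?_
    simp only [npow_zpow, ← zpow_add₀ h0.ne']
    congr 1; push_cast; ring
  · rintro ⟨a, b⟩ ⟨c, d⟩ h; simp at h ⊢; omega
  · rintro ⟨a, b⟩; exact ⟨a, by ring⟩
  · rintro ⟨a, b⟩ ⟨k, hk⟩; exact ⟨(k, a - k), by simp at hk ⊢; omega⟩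

lemma quart_sub {q : ℝ} (h0 : 0 < q) (h1 : q < 1) :
    phi q * phi q - phim q * phim q = 2 * q * psiT (q ^ 2) ^ 2 := by
  rw [phi_sub h0 h1 h0 h1, odd_sum _ (fun r => (r.1 + r.2 + 1, r.1 - r.2)), sq (psiT _), psiT,
    prod_sum (sum_psiT (by positivity) (sq_lt h0 h1)) (sum_psiT (by positivity) (sq_lt h0 h1)),
    mul_assoc, ← tsum_mul_left (a := q)]
  · congr 1; refine tsum_congr fun r => ?_
    simp only [npow_zpow, ← zpow_add₀ h0.ne', ← zpow_one_add₀ h0.ne']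
    congr 1; push_cast; ring
  · rintro ⟨a, b⟩ ⟨c, d⟩ h; simp at h ⊢; omega
  · rintro ⟨a, b⟩; exact ⟨a, by ring⟩
  · rintro ⟨a, b⟩ ⟨k, hk⟩; exact ⟨(k, a - k - 1), by simp at hk ⊢; omega⟩

lemma split_sum {F : ℤ × ℤ → ℝ} (hF : Summable F) (e : ℤ × ℤ → ℤ × ℤ) (hi : Function.Injective e)
    (he : ∀ r, Even ((e r).1 + (e r).2)) (hs : ∀ p : ℤ × ℤ, Even (p.1 + p.2) → ∃ r, e r = p)
    (hsym : ∀ p, F (-1 - p.1, p.2) = F p) :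
    ∑' p, F p = 2 * ∑' r, F (e r) := by
  have h1 := even_sum F e hi he hs
  have h2 := odd_sum F (fun r => (-1 - (e r).1, (e r).2)) ?_ ?_ ?_
  · have hs1 : Summable fun p => F p * (1 + (-1 : ℝ) ^ (p.1 + p.2)) := by
      refine (hF.norm.mul_right 2).of_norm_bounded fun p => ?_
      rw [norm_mul]
      refine mul_le_mul_of_nonneg_left ?_ (norm_nonneg _)
      rcases Int.even_or_odd (p.1 + p.2) with h | h <;> norm_num [h.neg_one_zpow]
    have hs2 : Summable fun p => F p * (1 - (-1 : ℝ) ^ (p.1 + p.2)) := by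
      refine (hF.norm.mul_right 2).of_norm_bounded fun p => ?_
      rw [norm_mul]
      refine mul_le_mul_of_nonneg_left ?_ (norm_nonneg _)
      rcases Int.even_or_odd (p.1 + p.2) with h | h <;> norm_num [h.neg_one_zpow]
    have h3 := hs1.tsum_add hs2
    rw [h1, h2] at h3
    have h4 : ∑' p, (F p * (1 + (-1 : ℝ) ^ (p.1 + p.2)) + F p * (1 - (-1 : ℝ) ^ (p.1 + p.2))) =
        2 * ∑' p, F p := by
      rw [← tsum_mul_left]; exact tsum_congr fun p => by ring
    simp only [hsym] at h3
    linarith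
  · intro a b h
    apply hi
    simp at h
    exact Prod.ext h.1 h.2
  · intro r
    obtain ⟨k, hk⟩ := he r
    exact ⟨(e r).2 - k - 1, by simp; omega⟩
  · rintro ⟨a, b⟩ ⟨k, hk⟩
    obtain ⟨r, hr⟩ := hs (-1 - a, b) ⟨b - k - 1, by simp at hk ⊢; omega⟩
    exact ⟨r, by simp [hr]⟩

lemma psi_sq {q : ℝ} (h0 : 0 < q) (h1 : q < 1) :
    psiT q ^ 2 = 2 * (psiT (q ^ 2) * phi (q ^ 2)) := by
  rw [sq, psiT, prod_sum (sum_psiT h0 h1) (sum_psiT h0 h1),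
    split_sum (prod_summable (sum_psiT h0 h1) (sum_psiT h0 h1)) (fun r => (r.1 + r.2, r.1 - r.2)),
    psiT, phi, prod_sum (sum_psiT (by positivity) (sq_lt h0 h1)) (sum_phi (by positivity) (sq_lt h0 h1))]
  · congr 1; refine tsum_congr fun r => ?_
    simp only [npow_zpow, ← zpow_add₀ h0.ne']
    congr 1; push_cast; ring
  · rintro ⟨a, b⟩ ⟨c, d⟩ h; simp at h ⊢; omega
  · rintro ⟨a, b⟩; exact ⟨a, by ring⟩
  · rintro ⟨a, b⟩ ⟨k, hk⟩; exact ⟨(k, a - k), by simp at hk ⊢; omega⟩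
  · rintro ⟨a, b⟩; simp only; congr 2; ring

lemma theta_quartic {q : ℝ} (h0 : 0 < q) (h1 : q < 1) :
    phi q ^ 4 = phim q ^ 4 + q * psiT q ^ 4 := by
  have e1 := quart_add h0 h1
  have e2 := quart_sub h0 h1
  have e3 := psi_sq h0 h1
  have : psiT q ^ 4 = (2 * (psiT (q ^ 2) * phi (q ^ 2))) ^ 2 := by rw [← e3]; ring
  rw [this]
  have : phi q ^ 4 - phim q ^ 4 =
    (phi q * phi q - phim q * phim q) * (phi q * phi q + phim q * phim q) := by ring
  rw [e1, e2] at this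
  linarith

lemma theta_cubic {q : ℝ} (h0 : 0 < q) (h1 : q < 1) :
    phi q * phi (q ^ 3) = phim q * phim (q ^ 3) + q * (psiT q * psiT (q ^ 3)) := by
  have h0' : 0 < q ^ 3 := by positivity
  have h1' : q ^ 3 < 1 := pow_lt_one₀ h0.le h1 three_ne_zero
  have e1 : phi q * phi (q ^ 3) - phim q * phim (q ^ 3) =
      2 * ∑' r : ℤ × ℤ, q ^ ((2 * r.1 + 1 + r.2) ^ 2 + 3 * r.2 ^ 2) := by
    rw [phi_sub h0 h1 h0' h1', odd_sum _ (fun r => (2 * r.1 + 1 + r.2, r.2))]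
    · congr 1; refine tsum_congr fun r => ?_
      simp only [npow_zpow, ← zpow_add₀ h0.ne']
      congr 1
    · rintro ⟨a, b⟩ ⟨c, d⟩ h; simp at h ⊢; omega
    · rintro ⟨a, b⟩; exact ⟨a + b, by ring⟩
    · rintro ⟨a, b⟩ ⟨k, hk⟩; exact ⟨(k - b, b), by simp at hk ⊢; omega⟩
  have e2 : q * (psiT q * psiT (q ^ 3)) =
      2 * ∑' r : ℤ × ℤ, q ^ ((2 * r.1 + 1 + r.2) ^ 2 + 3 * r.2 ^ 2) := by
    rw [psiT, psiT, prod_sum (sum_psiT h0 h1) (sum_psiT h0' h1'),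
      split_sum (prod_summable (sum_psiT h0 h1) (sum_psiT h0' h1')) (fun r => (r.1 + 2 * r.2, r.1)),
      mul_left_comm, ← tsum_mul_left (a := q)]
    · congr 1; refine tsum_congr fun r => ?_
      simp only [npow_zpow, ← zpow_add₀ h0.ne', ← zpow_one_add₀ h0.ne']
      congr 1; push_cast; ring
    · rintro ⟨a, b⟩ ⟨c, d⟩ h; simp at h ⊢; omega
    · rintro ⟨a, b⟩; exact ⟨a + b, by ring⟩
    · rintro ⟨a, b⟩ ⟨k, hk⟩; exact ⟨(b, k - b), by simp at hk ⊢; omega⟩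
    · rintro ⟨a, b⟩; simp only; congr 2; ring
  linarith

lemma alg_schlafli (q A A1 A2 B B1 B2 : ℝ) (hq : 0 < q) (hA : 0 < A) (hA1 : 0 < A1) (hA2 : 0 < A2)
    (hB : 0 < B) (hB1 : 0 < B1) (hB2 : 0 < B2) (pA : A * A1 * A2 = 1) (pB : B * B1 * B2 = 1)
    (eA : A ^ 8 = A1 ^ 8 + 16 * q * A2 ^ 8) (eB : B ^ 8 = B1 ^ 8 + 16 * q ^ 3 * B2 ^ 8)
    (eC : A ^ 2 * B ^ 2 = A1 ^ 2 * B1 ^ 2 + 4 * q * (A2 ^ 2 * B2 ^ 2)) :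
    B ^ 12 + q * A ^ 12 = A ^ 9 * B ^ 9 - 8 * q * A ^ 3 * B ^ 3 := by
  obtain ⟨p, hp⟩ : ∃ p, p = (A * B) ^ 2 := ⟨_, rfl⟩
  obtain ⟨w, hw⟩ : ∃ w, w = (A1 * B1) ^ 2 := ⟨_, rfl⟩
  obtain ⟨t, ht⟩ : ∃ t, t = 4 * q * (A2 * B2) ^ 2 := ⟨_, rfl⟩
  have hp0 : 0 < p := by rw [hp]; positivity
  have hw0 : 0 < w := by rw [hw]; positivity
  have ht0 : 0 < t := by rw [ht]; positivity
  have hpw : p = w + t := by rw [hp, hw, ht]; linarith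
  have hq4 : 4 * q = p * w * t := by
    have : p * w * t = 4 * q * ((A * A1 * A2) * (B * B1 * B2)) ^ 2 := by rw [hp, hw, ht]; ring
    rw [this, pA, pB]; ring
  obtain ⟨α, hα⟩ : ∃ α, α = 16 * q * A2 ^ 8 / A ^ 8 := ⟨_, rfl⟩
  obtain ⟨β, hβ⟩ : ∃ β, β = 16 * q ^ 3 * B2 ^ 8 / B ^ 8 := ⟨_, rfl⟩
  have a1 : A ^ 8 * α = 16 * q * A2 ^ 8 := by rw [hα]; field_simp
  have b1 : B ^ 8 * β = 16 * q ^ 3 * B2 ^ 8 := by rw [hβ]; field_simp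
  have a2 : A ^ 8 * (1 - α) = A1 ^ 8 := by linarith
  have b2 : B ^ 8 * (1 - β) = B1 ^ 8 := by linarith
  have a3 : A ^ 24 * (α * (1 - α)) = 16 * q := by
    have : A ^ 24 * (α * (1 - α)) = A ^ 8 * (A ^ 8 * α) * (A ^ 8 * (1 - α)) := by ring
    rw [this, a1, a2]
    have : A ^ 8 * (16 * q * A2 ^ 8) * A1 ^ 8 = 16 * q * (A * A1 * A2) ^ 8 := by ring
    rw [this, pA]; ring
  have b3 : B ^ 24 * (β * (1 - β)) = 16 * q ^ 3 := by
    have : B ^ 24 * (β * (1 - β)) = B ^ 8 * (B ^ 8 * β) * (B ^ 8 * (1 - β)) := by ring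
    rw [this, b1, b2]
    have : B ^ 8 * (16 * q ^ 3 * B2 ^ 8) * B1 ^ 8 = 16 * q ^ 3 * (B * B1 * B2) ^ 8 := by ring
    rw [this, pB]; ring
  have c1 : p ^ 4 * (α * β) = t ^ 4 := by
    have : p ^ 4 * (α * β) = (A ^ 8 * α) * (B ^ 8 * β) := by rw [hp]; ring
    rw [this, a1, b1, ht]; ring
  have c2 : p ^ 4 * ((1 - α) * (1 - β)) = w ^ 4 := by
    have : p ^ 4 * ((1 - α) * (1 - β)) = (A ^ 8 * (1 - α)) * (B ^ 8 * (1 - β)) := by rw [hp]; ring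
    rw [this, a2, b2, hw]; ring
  have X1 : 16 * q * (B ^ 24 + q ^ 2 * A ^ 24) = p ^ 12 * (α * (1 - α) + β * (1 - β)) := by
    have : p ^ 12 = A ^ 24 * B ^ 24 := by rw [hp]; ring
    rw [this]
    linear_combination (-B ^ 24) * a3 - A ^ 24 * b3
  have X2 : p ^ 12 * (α * (1 - α) + β * (1 - β)) =
      p ^ 4 * (p ^ 4 * (w ^ 4 + t ^ 4) - (w ^ 4 - t ^ 4) ^ 2) := by
    rw [← c1, ← c2]; ring
  have X3 : 16 * q * ((B ^ 12 + q * A ^ 12) ^ 2) = 16 * q * ((A ^ 9 * B ^ 9 - 8 * q * A ^ 3 * B ^ 3) ^ 2) := by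
    have l1 : (B ^ 12 + q * A ^ 12) ^ 2 = (B ^ 24 + q ^ 2 * A ^ 24) + 2 * q * p ^ 6 := by rw [hp]; ring
    have l2 : (A ^ 9 * B ^ 9 - 8 * q * A ^ 3 * B ^ 3) ^ 2 = p ^ 3 * (p ^ 3 - 8 * q) ^ 2 := by rw [hp]; ring
    rw [l1, l2, mul_add, X1, X2]
    have : q = p * w * t / 4 := by linarith
    rw [this, hpw]; ring
  have X4 := mul_left_cancel₀ (by positivity) X3
  have hpos : 0 ≤ A ^ 9 * B ^ 9 - 8 * q * A ^ 3 * B ^ 3 := by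
    have e : A ^ 9 * B ^ 9 - 8 * q * A ^ 3 * B ^ 3 = (A * B) ^ 3 * (p ^ 3 - 8 * q) := by rw [hp]; ring
    rw [e]
    refine mul_nonneg (by positivity) ?_
    have : p ^ 3 - 8 * q = p * (w ^ 2 + t ^ 2) := by
      have : 8 * q = 2 * (p * w * t) := by linarith
      rw [this, hpw]; ring
    rw [this]; positivity
  exact (sq_eq_sq₀ (by positivity) hpos).mp X4

lemma schlafli {q : ℝ} (h0 : 0 < q) (h1 : q < 1) :
    chi (q ^ 3) ^ 12 + q * chi q ^ 12 =
      chi q ^ 9 * chi (q ^ 3) ^ 9 - 8 * q * chi q ^ 3 * chi (q ^ 3) ^ 3 := by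
  have h0' : 0 < q ^ 3 := by positivity
  have h1' : q ^ 3 < 1 := pow_lt_one₀ h0.le h1 three_ne_zero
  have hE := (Ef_pos h0 h1).ne'
  have hE' := (Ef_pos h0' h1').ne'
  have pos : ∀ r : ℝ, 0 < r → r < 1 → 0 < chi r ∧ 0 < chi1 r ∧ 0 < chi2 r := fun r a b =>
    ⟨by rw [chi_eq]; exact tprod_pos_aux a b 1 (by norm_num) 1 one_ne_zero,
     tprod_pos_aux a b (-1) (by norm_num) 1 one_ne_zero,
     tprod_pos_aux a b 1 (by norm_num) 2 two_ne_zero⟩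
  obtain ⟨x1, x2, x3⟩ := pos q h0 h1
  obtain ⟨y1, y2, y3⟩ := pos (q ^ 3) h0' h1'
  have quart : ∀ r : ℝ, 0 < r → r < 1 → chi r ^ 8 = chi1 r ^ 8 + 16 * r * chi2 r ^ 8 := by
    intro r a b
    have := theta_quartic a b
    rw [phi_eq a b, phim_eq a b, psiT_eq a b] at this
    have hE := (Ef_pos a b).ne'
    apply mul_left_cancel₀ (pow_ne_zero 4 hE)
    linear_combination this
  refine alg_schlafli q _ (chi1 q) (chi2 q) _ (chi1 (q ^ 3)) (chi2 (q ^ 3)) h0 x1 x2 x3 y1 y2 y3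
    (chi_prod h0 h1) (chi_prod h0' h1') (quart q h0 h1) (quart _ h0' h1') ?_
  have := theta_cubic h0 h1
  rw [phi_eq h0 h1, phim_eq h0 h1, psiT_eq h0 h1, phi_eq h0' h1', phim_eq h0' h1',
    psiT_eq h0' h1'] at this
  apply mul_left_cancel₀ (mul_ne_zero hE hE')
  linear_combination this

lemma hasSum_of_eq {ι : Type*} {f g : ι → ℝ} {a : ℝ} (h : HasSum f a) (e : ∀ n, g n = f n) :
    HasSum g a := by
  rw [funext e]; exact h

lemma hasSum_coth {y : ℝ} (hy : 0 < y) :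
    HasSum (fun m : ℤ => 1 / ((m : ℝ) ^ 2 + y ^ 2))
      (Real.pi / y * (Real.cosh (Real.pi * y) / Real.sinh (Real.pi * y))) := by
  have hs : Summable fun n : ℕ => 1 / (((n : ℝ) + 1) ^ 2 + y ^ 2) := by
    have h2 : Summable fun n : ℕ => 1 / ((n : ℝ) + 1) ^ 2 := by
      have := (summable_nat_add_iff 1).mpr (Real.summable_one_div_nat_pow.mpr one_lt_two)
      simpa using this
    refine h2.of_nonneg_of_le (fun n => by positivity) fun n => ?_
    refine one_div_le_one_div_of_le (by positivity) ?_
    nlinarith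
  have hz : ((y : ℂ) * Complex.I) ∈ Complex.integerComplement := by
    rintro ⟨n, hn⟩
    have := congrArg Complex.im hn
    simp at this
    exact hy.ne this
  have hsinh : Real.sinh (Real.pi * y) ≠ 0 := (Real.sinh_pos_iff.mpr (by positivity)).ne'
  have key := cot_series_rep' hz
  have e1 : ∀ n : ℕ, (1 / ((y : ℂ) * Complex.I - (n + 1)) + 1 / ((y : ℂ) * Complex.I + (n + 1))) =
      (-2 * y * Complex.I) * ((1 / (((n : ℝ) + 1) ^ 2 + y ^ 2) : ℝ) : ℂ) := by
    intro n
    have n1 : (y : ℂ) * Complex.I - (n + 1) ≠ 0 := fun h => by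
      have := congrArg Complex.im h; simp at this; exact hy.ne' this
    have n2 : (y : ℂ) * Complex.I + (n + 1) ≠ 0 := fun h => by
      have := congrArg Complex.im h; simp at this; exact hy.ne' this
    have n3 : ((n : ℂ) + 1) ^ 2 + (y : ℂ) ^ 2 ≠ 0 := by
      have : (((n : ℝ) + 1) ^ 2 + y ^ 2 : ℝ) ≠ 0 := by positivity
      exact_mod_cast this
    push_cast
    rw [div_add_div _ _ n1 n2, mul_one_div, div_eq_div_iff (mul_ne_zero n1 n2) n3]
    linear_combination (2 * (y : ℂ) ^ 3 * Complex.I) * Complex.I_sq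
  simp_rw [e1] at key
  rw [tsum_mul_left, ← Complex.ofReal_tsum] at key
  have e2 : Complex.cot (Real.pi * (y * Complex.I)) =
      -Complex.I * ((Real.cosh (Real.pi * y) / Real.sinh (Real.pi * y) : ℝ) : ℂ) := by
    have hs' : Complex.sinh (Real.pi * y) ≠ 0 := by exact_mod_cast hsinh
    rw [Complex.cot, ← mul_assoc, Complex.cos_mul_I, Complex.sin_mul_I]
    push_cast
    field_simp
    rw [Complex.I_sq]; ring
  rw [e2] at key
  have e3 : ∑' n : ℕ, 1 / (((n : ℝ) + 1) ^ 2 + y ^ 2) =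
      (Real.pi * (Real.cosh (Real.pi * y) / Real.sinh (Real.pi * y)) - 1 / y) / (2 * y) := by
    have hyc : (y : ℂ) ≠ 0 := by exact_mod_cast hy.ne'
    have h3 : (1 : ℂ) / (y * Complex.I) = -Complex.I * ((1 / y : ℝ) : ℂ) := by
      push_cast
      have := Complex.I_ne_zero
      field_simp
      rw [Complex.I_sq]; ring
    rw [h3] at key
    generalize Real.cosh (Real.pi * y) / Real.sinh (Real.pi * y) = c at *
    generalize ∑' n : ℕ, 1 / (((n : ℝ) + 1) ^ 2 + y ^ 2) = S at *
    have := congrArg Complex.im key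
    simp at this
    field_simp at this ⊢
    linarith
  have hh := hs.hasSum
  rw [e3] at hh
  have := HasSum.of_add_one_of_neg_add_one (f := fun m : ℤ => 1 / ((m : ℝ) ^ 2 + y ^ 2))
    (hasSum_of_eq hh fun n => by push_cast; rfl)
    (hasSum_of_eq hh fun n => by push_cast; rw [neg_sq])
  convert this using 1
  have := hy.ne'
  simp
  field_simp
  ring

lemma tsum_alt {y : ℝ} (hy : 0 < y) :
    ∑' m : ℤ, (-1 : ℝ) ^ m / ((m : ℝ) ^ 2 + y ^ 2) =
      Real.pi / (y * Real.sinh (Real.pi * y)) := by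
  have h1 := hasSum_coth hy
  have h2 := hasSum_coth (half_pos hy)
  have h3 : ∑' m : ℤ, (1 + (-1 : ℝ) ^ m) * (1 / ((m : ℝ) ^ 2 + y ^ 2)) =
      1 / 2 * ∑' m : ℤ, 1 / ((m : ℝ) ^ 2 + (y / 2) ^ 2) := by
    have hi : Function.Injective (fun m : ℤ => 2 * m) := fun a b h => by simpa using h
    rw [← hi.tsum_eq, ← tsum_mul_left]
    · refine tsum_congr fun m => ?_
      rw [(even_two_mul m).neg_one_zpow]
      push_cast
      have : ((2 * (m : ℝ)) ^ 2 + y ^ 2) ≠ 0 := by positivity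
      have : ((m : ℝ) ^ 2 + (y / 2) ^ 2) ≠ 0 := by positivity
      field_simp
      ring
    · intro m hm
      by_cases h : Even m
      · obtain ⟨k, rfl⟩ := h
        exact ⟨k, by simp; ring⟩
      · exfalso; apply hm
        simp [(Int.not_even_iff_odd.mp h).neg_one_zpow]
  have h4 : Summable fun m : ℤ => (-1 : ℝ) ^ m / ((m : ℝ) ^ 2 + y ^ 2) := by
    refine h1.summable.of_norm_bounded fun m => ?_
    rw [norm_div, norm_zpow, norm_neg, norm_one, one_zpow, Real.norm_of_nonneg (by positivity)]
  have h5 : ∑' m : ℤ, (1 + (-1 : ℝ) ^ m) * (1 / ((m : ℝ) ^ 2 + y ^ 2)) =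
      ∑' m : ℤ, 1 / ((m : ℝ) ^ 2 + y ^ 2) + ∑' m : ℤ, (-1 : ℝ) ^ m / ((m : ℝ) ^ 2 + y ^ 2) := by
    rw [← h1.summable.tsum_add h4]
    exact tsum_congr fun m => by ring
  rw [h3, h1.tsum_eq, h2.tsum_eq] at h5
  have hv : 0 < Real.sinh (Real.pi * (y / 2)) := Real.sinh_pos_iff.mpr (by positivity)
  have hc : 0 < Real.cosh (Real.pi * (y / 2)) := Real.cosh_pos _
  have e : Real.pi * y = 2 * (Real.pi * (y / 2)) := by ring
  have hcs := Real.cosh_sq (Real.pi * (y / 2))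
  have h6 := eq_sub_of_add_eq' h5.symm
  rw [h6, e, Real.sinh_two_mul, Real.cosh_two_mul]
  generalize Real.sinh (Real.pi * (y / 2)) = s at *
  generalize Real.cosh (Real.pi * (y / 2)) = c at *
  field_simp
  rw [hcs]; ring

lemma hasSum_log_chi {q : ℝ} (h0 : 0 < q) (h1 : q < 1) :
    HasSum (fun k : ℕ => (-1 : ℝ) ^ k / (k + 1) * (q ^ (k + 1) / (1 - q ^ (2 * (k + 1)))))
      (Real.log (chi q)) := by
  let F : ℕ × ℕ → ℝ := fun p => (-1 : ℝ) ^ p.2 / (p.2 + 1) * q ^ ((2 * p.1 + 1) * (p.2 + 1))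
  have hF : Summable F := by
    have hg := summable_geometric_of_lt_one h0.le h1
    have := summable_mul_of_summable_norm hg.norm hg.norm
    refine this.of_norm_bounded fun p => ?_
    simp only [F]
    rw [norm_mul, norm_div, norm_pow, norm_neg, norm_one, one_pow,
      Real.norm_of_nonneg (by positivity : (0 : ℝ) ≤ p.2 + 1), Real.norm_of_nonneg (by positivity), ← pow_add]
    have a1 : 1 / ((p.2 : ℝ) + 1) ≤ 1 := by
      rw [div_le_one (by positivity)]; linarith [(Nat.cast_nonneg p.2 : (0 : ℝ) ≤ p.2)]
    have a2 : q ^ ((2 * p.1 + 1) * (p.2 + 1)) ≤ q ^ (p.1 + p.2) :=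
      pow_le_pow_of_le_one h0.le h1.le (by nlinarith)
    calc _ ≤ 1 * q ^ ((2 * p.1 + 1) * (p.2 + 1)) := by gcongr
      _ ≤ _ := by rw [one_mul]; exact a2
  have r1 : ∀ j : ℕ, HasSum (fun k => F (j, k)) (Real.log (1 + q ^ (2 * j + 1))) := by
    intro j
    have hlt : q ^ (2 * j + 1) < 1 := pow_lt_one₀ h0.le h1 (by omega)
    have hpos : 0 < q ^ (2 * j + 1) := by positivity
    have := (Real.hasSum_pow_div_log_of_abs_lt_one (x := -q ^ (2 * j + 1))
      (by rw [abs_neg, abs_of_pos hpos]; exact hlt)).neg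
    simp only [neg_neg, sub_neg_eq_add] at this
    refine hasSum_of_eq this fun k => ?_
    simp only [F]
    rw [neg_pow (q ^ (2 * j + 1)), pow_succ (-1 : ℝ), pow_mul]; ring
  have r2 : ∀ k : ℕ, HasSum (fun j => F (j, k))
      ((-1 : ℝ) ^ k / (k + 1) * (q ^ (k + 1) / (1 - q ^ (2 * (k + 1))))) := by
    intro k
    have hlt : q ^ (2 * (k + 1)) < 1 := pow_lt_one₀ h0.le h1 (by omega)
    have := ((hasSum_geometric_of_lt_one (by positivity) hlt).mul_left (q ^ (k + 1))).mul_left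
      ((-1 : ℝ) ^ k / (k + 1))
    refine hasSum_of_eq this fun j => ?_
    simp only [F]
    rw [← pow_mul, ← pow_add]
    congr 2; ring
  have s1 := hF.hasSum.prod_fiberwise r1
  have s2 := ((Equiv.prodComm ℕ ℕ).hasSum_iff.mpr hF.hasSum).prod_fiberwise r2
  have : chi q = Real.exp (∑' p, F p) :=
    (Real.hasProd_of_hasSum_log (fun j => by positivity) s1).tprod_eq
  rw [this, Real.log_exp]
  exact s2

lemma hasSum_n {q : ℝ} (h0 : 0 < q) (h1 : q < 1) :
    HasSum (fun n : ℤ => (-1 : ℝ) ^ n / ((3 * n + 1).natAbs : ℝ) *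
      (q ^ (3 * n + 1).natAbs / (1 - q ^ (2 * (3 * n + 1).natAbs))))
      (Real.log (chi q) - 1 / 3 * Real.log (chi (q ^ 3))) := by
  have h0' : 0 < q ^ 3 := by positivity
  have h1' : q ^ 3 < 1 := pow_lt_one₀ h0.le h1 three_ne_zero
  have hA := hasSum_log_chi h0 h1
  have hB := (hasSum_log_chi h0' h1').mul_left (1 / 3)
  set h : ℕ → ℝ := fun k : ℕ => (-1 : ℝ) ^ k / (k + 1) * (q ^ (k + 1) / (1 - q ^ (2 * (k + 1)))) with hh
  have hres := Nat.sumByResidueClasses hA.summable 3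
  have inj : ∀ j : ℕ, Function.Injective (fun m : ℕ => j + 3 * m) := fun j a b e => by
    simp at e; exact e
  have hsm : ∀ j : ℕ, Summable fun m : ℕ => h (j + 3 * m) := fun j => hA.summable.comp_injective (inj j)
  have hres' : ∑' n, h n = ∑' m, h (0 + 3 * m) + ∑' m, h (1 + 3 * m) + ∑' m, h (2 + 3 * m) := by
    rw [hres]; exact Fin.sum_univ_three (fun j : Fin 3 => ∑' m, h (j.val + 3 * m))
  have e2 : ∑' m, h (2 + 3 * m) = 1 / 3 * Real.log (chi (q ^ 3)) := by
    rw [← hB.tsum_eq]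
    refine tsum_congr fun m => ?_
    simp only [hh]
    have : (-1 : ℝ) ^ (2 + 3 * m) = (-1) ^ m := by
      rw [pow_add, pow_mul]; norm_num
    rw [this, ← pow_mul, ← pow_mul]
    have x1 : 2 + 3 * m + 1 = 3 * (m + 1) := by ring
    have x2 : 3 * (2 * (m + 1)) = 2 * (3 * (m + 1)) := by ring
    rw [x1, x2]
    push_cast
    have : (m : ℝ) + 1 ≠ 0 := by positivity
    have x3 : (2 : ℝ) + 3 * m + 1 = 3 * (m + 1) := by ring
    rw [x3]
    field_simp
  rw [hA.tsum_eq, e2] at hres'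
  have : Real.log (chi q) - 1 / 3 * Real.log (chi (q ^ 3)) =
    ∑' m, h (0 + 3 * m) + ∑' m, h (1 + 3 * m) := by linarith
  rw [this]
  refine HasSum.of_nat_of_neg_add_one ?_ ?_
  · refine hasSum_of_eq (hsm 0).hasSum fun m => ?_
    have x1 : (3 * (m : ℤ) + 1).natAbs = 3 * m + 1 := by omega
    rw [x1, zpow_natCast]
    simp only [hh, zero_add]
    have : (-1 : ℝ) ^ (3 * m) = (-1) ^ m := by rw [pow_mul]; norm_num
    rw [this]; push_cast; rfl
  · refine hasSum_of_eq (hsm 1).hasSum fun m => ?_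
    have x1 : (3 * (-((m : ℤ) + 1)) + 1).natAbs = 1 + 3 * m + 1 := by omega
    rw [x1, zpow_neg]
    simp only [hh]
    have : (-1 : ℝ) ^ (1 + 3 * m) = ((-1) ^ ((m : ℤ) + 1))⁻¹ := by
      rw [← Nat.cast_succ, zpow_natCast, ← inv_pow, inv_neg_one, pow_add, pow_mul]; norm_num [pow_succ]
    rw [this]; push_cast; rfl

/-- For real `x > 0`, with `q = e^{-π/x}` and `u = -q^{1/3} χ(q)/χ³(q³)`,
`F_{(3,1)}(x) = -(2π/(9x)) log((1 + u³)/(1 - 8u³))`. -/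
theorem F31_evaluation (x : ℝ) (hx : 0 < x) (q u : ℝ)
    (hq : q = Real.exp (-Real.pi / x))
    (hu : u = -(q ^ ((1 : ℝ) / 3)) * chi q / (chi (q ^ 3)) ^ 3) :
    Tendsto (fun N : ℕ => ∑ n ∈ Finset.Ioo (-(N : ℤ)) (N : ℤ),
        ∑' m : ℤ, (-1 : ℝ) ^ (m + n) / ((x * m) ^ 2 + (3 * (n : ℝ) + 1) ^ 2))
      atTop
      (nhds (-(2 * Real.pi / (9 * x)) * Real.log ((1 + u ^ 3) / (1 - 8 * u ^ 3)))) := by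
  have hpi := Real.pi_pos
  have h0 : 0 < q := by rw [hq]; exact Real.exp_pos _
  have h1 : q < 1 := by
    rw [hq, Real.exp_lt_one_iff, neg_div]
    have : 0 < Real.pi / x := by positivity
    linarith
  have h0' : 0 < q ^ 3 := by positivity
  have h1' : q ^ 3 < 1 := pow_lt_one₀ h0.le h1 three_ne_zero
  have cpos : ∀ r : ℝ, 0 < r → r < 1 → 0 < chi r := fun r a b => by
    rw [chi_eq]; exact tprod_pos_aux a b 1 (by norm_num) 1 one_ne_zero
  have hA := cpos q h0 h1
  have hB := cpos _ h0' h1'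
  have hS := schlafli h0 h1
  have hterm : ∀ n : ℤ, ∑' m : ℤ, (-1 : ℝ) ^ (m + n) / ((x * m) ^ 2 + (3 * (n : ℝ) + 1) ^ 2) =
      2 * Real.pi / x * ((-1 : ℝ) ^ n / ((3 * n + 1).natAbs : ℝ) *
      (q ^ (3 * n + 1).natAbs / (1 - q ^ (2 * (3 * n + 1).natAbs)))) := by
    intro n
    obtain ⟨k, hk⟩ : ∃ k, k = (3 * n + 1).natAbs := ⟨_, rfl⟩
    have hk0 : 0 < k := by omega
    have hkr : (3 * (n : ℝ) + 1) ^ 2 = (k : ℝ) ^ 2 := by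
      rw [hk, Nat.cast_natAbs, Int.cast_abs, sq_abs]; push_cast; rfl
    have hkp : (0 : ℝ) < k := by exact_mod_cast hk0
    rw [← hk, hkr]
    have hy : 0 < (k : ℝ) / x := by positivity
    have e1 : ∀ m : ℤ, (-1 : ℝ) ^ (m + n) / ((x * m) ^ 2 + (k : ℝ) ^ 2) =
        ((-1 : ℝ) ^ n / x ^ 2) * ((-1 : ℝ) ^ m / ((m : ℝ) ^ 2 + (k / x) ^ 2)) := by
      intro m
      rw [zpow_add₀ (by norm_num)]
      have : ((x * m) ^ 2 + (k : ℝ) ^ 2) ≠ 0 := by positivity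
      have : ((m : ℝ) ^ 2 + (k / x) ^ 2) ≠ 0 := by positivity
      field_simp
    simp_rw [e1]
    rw [tsum_mul_left, tsum_alt hy]
    have hqk : q ^ k = Real.exp (-(Real.pi * (k / x))) := by
      rw [hq, ← Real.exp_nat_mul]; congr 1; ring
    have hlt : q ^ k < 1 := pow_lt_one₀ h0.le h1 hk0.ne'
    have hqp : 0 < q ^ k := by positivity
    have hsinh : Real.sinh (Real.pi * (k / x)) = (1 - (q ^ k) ^ 2) / (2 * q ^ k) := by
      rw [Real.sinh_eq, ← hqk]
      have : Real.exp (Real.pi * (k / x)) = (q ^ k)⁻¹ := by rw [hqk, Real.exp_neg, inv_inv]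
      rw [this]; field_simp
    rw [hsinh, mul_comm 2 k, pow_mul]
    have : 1 - (q ^ k) ^ 2 ≠ 0 := by nlinarith
    field_simp
  simp_rw [hterm]
  have hsum := ((hasSum_n h0 h1).mul_left (2 * Real.pi / x))
  have hfin : Tendsto (fun N : ℕ => Finset.Ioo (-(N : ℤ)) (N : ℤ)) atTop atTop := by
    refine tendsto_atTop_finset_of_monotone ?_ ?_
    · intro a b hab c hc
      simp at hc ⊢; omega
    · intro c; exact ⟨c.natAbs + 1, by rw [Finset.mem_Ioo]; omega⟩
  have hT := Tendsto.comp hsum hfin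
  suffices hval : -(2 * Real.pi / (9 * x)) * Real.log ((1 + u ^ 3) / (1 - 8 * u ^ 3)) =
      2 * Real.pi / x * (Real.log (chi q) - 1 / 3 * Real.log (chi (q ^ 3))) by
    rw [hval]; exact hT
  have hu3 : u ^ 3 = -(q * chi q ^ 3 / chi (q ^ 3) ^ 9) := by
    have hc : (q ^ ((1 : ℝ) / 3)) ^ 3 = q := by
      rw [← Real.rpow_natCast, ← Real.rpow_mul h0.le]; norm_num
    rw [hu, div_pow, mul_pow, neg_pow, hc]
    ring
  have hq' : (1 + u ^ 3) / (1 - 8 * u ^ 3) = chi (q ^ 3) ^ 3 / chi q ^ 9 := by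
    rw [hu3]
    generalize chi q = A at *
    generalize chi (q ^ 3) = B at *
    have hd : 1 - 8 * -(q * A ^ 3 / B ^ 9) ≠ 0 := by
      have : 0 < q * A ^ 3 / B ^ 9 := by positivity
      linarith
    rw [div_eq_div_iff hd (by positivity)]
    field_simp
    linear_combination (-1 : ℝ) * hS
  rw [hq', Real.log_div (by positivity) (by positivity), Real.log_pow, Real.log_pow]
  push_cast
  field_simp
  ring
end
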